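/- Let r₁, r₂ > 0, θ ∈ ℝ, σ > 0. Let W₁ and W₂ be independent random variables having the variance-gamma distributions VG(r₁, θ, σ, 0) and VG(r₂, θ, σ, 0) respectively (i.e., W₁ has density f with parameters (r₁, θ, σ, 0) and W₂ has density f with parameters (r₂, θ, σ, 0)). Then W₁ + W₂ has the variance-gamma distribution VG(r₁ + r₂, θ, σ, 0), i.e., W₁ + W₂ has probability density function f with parameters (r₁ + r₂, θ, σ, 0). -/

import Mathlib

/-!
`VG(r, θ, σ, 0)` is the law of Brownian motion with drift `θ` and volatility `σ` evaluated at an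
independent gamma time of shape `r / 2` and rate `1 / 2`: in the mixture integral the substitution
`s = |x| / √(θ² + σ²) * exp u` turns the integrand into `exp (ν u - z cosh u)` with
`ν = (r - 1) / 2`, whose integral over the line is `2 K_ν(z)`. Both the Gaussian laws of the motion
and the gamma laws of a fixed rate are convolution semigroups, and mixing one convolution semigroup
over the members of another produces a third.
-/

open MeasureTheory ProbabilityTheory

/-- The modified Bessel function of the second kind `K_ν(x)`, for `x > 0` given by
`K_ν(x) = ∫₀^∞ exp(−x cosh t) cosh(ν t) dt`. -/
noncomputable def besselK (ν x : ℝ) : ℝ :=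
  ∫ t in Set.Ioi (0 : ℝ), Real.exp (-x * Real.cosh t) * Real.cosh (ν * t)

/-- The density of the variance-gamma distribution `VG(r, θ, σ, 0)`. -/
noncomputable def vgPDF (r θ σ x : ℝ) : ℝ :=
  1 / (σ * Real.sqrt Real.pi * Real.Gamma (r / 2)) * Real.exp (θ * x / σ ^ 2) *
    (|x| / (2 * Real.sqrt (θ ^ 2 + σ ^ 2))) ^ ((r - 1) / 2) *
    besselK ((r - 1) / 2) (Real.sqrt (θ ^ 2 + σ ^ 2) * |x| / σ ^ 2)

open Set
open scoped ENNReal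

section Bessel

lemma sq_div_four_le_cosh (u : ℝ) : u ^ 2 / 4 ≤ Real.cosh u := by
  have hquad := Real.quadratic_le_exp_of_nonneg (abs_nonneg u)
  rw [sq_abs] at hquad
  rw [Real.cosh_eq]
  linarith [Real.exp_abs_le u, abs_nonneg u]

lemma integrable_exp_mul_sub_mul_cosh (ν : ℝ) {z : ℝ} (hz : 0 < z) :
    Integrable fun u => Real.exp (ν * u - z * Real.cosh u) := by
  refine ((integrable_exp_neg_mul_sq (b := z / 8) (by positivity)).const_mul
    (Real.exp (2 * ν ^ 2 / z))).mono' (by fun_prop) (ae_of_all _ fun u => ?_)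
  have hYoung : ν * u ≤ z * (u ^ 2 / 8) + 2 * ν ^ 2 / z := by
    have hsq : z * (u ^ 2 / 8) + 2 * ν ^ 2 / z - ν * u = (z * u - 4 * ν) ^ 2 / (8 * z) := by
      field_simp
      ring
    linarith [show 0 ≤ (z * u - 4 * ν) ^ 2 / (8 * z) by positivity]
  rw [Real.norm_of_nonneg (Real.exp_pos _).le, ← Real.exp_add, Real.exp_le_exp]
  linarith [mul_le_mul_of_nonneg_left (sq_div_four_le_cosh u) hz.le]

lemma integral_exp_mul_sub_mul_cosh (ν : ℝ) {z : ℝ} (hz : 0 < z) :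
    ∫ u, Real.exp (ν * u - z * Real.cosh u) = 2 * besselK ν z := by
  have hint := integrable_exp_mul_sub_mul_cosh ν hz
  have hint_neg := integrable_exp_mul_sub_mul_cosh (-ν) hz
  have hfold : ∫ u in Iic 0, Real.exp (ν * u - z * Real.cosh u) =
      ∫ u in Ioi 0, Real.exp (-ν * u - z * Real.cosh u) := by
    simpa using (integral_comp_neg_Ioi 0 fun u => Real.exp (ν * u - z * Real.cosh u)).symm
  rw [← intervalIntegral.integral_Iic_add_Ioi hint.integrableOn hint.integrableOn (b := 0), hfold,
    ← integral_add hint_neg.integrableOn hint.integrableOn, besselK, ← integral_const_mul]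
  congr 1 with u
  rw [Real.cosh_eq (ν * u), sub_eq_add_neg, sub_eq_add_neg, Real.exp_add, Real.exp_add]
  ring_nf

lemma image_mul_exp_univ {c : ℝ} (hc : 0 < c) : (fun u => c * Real.exp u) '' univ = Ioi 0 := by
  rw [image_univ, ← Real.range_exp, ← Function.comp_def, range_comp, Real.range_exp,
    image_mul_left_Ioi hc, mul_zero]

lemma lintegral_Ioi_eq_lintegral_mul_exp {c : ℝ} (hc : 0 < c) (f : ℝ → ℝ≥0∞) :
    ∫⁻ s in Ioi 0, f s = ∫⁻ u, ENNReal.ofReal (c * Real.exp u) * f (c * Real.exp u) := by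
  have hderiv : ∀ u ∈ univ, HasDerivWithinAt (fun u => c * Real.exp u) (c * Real.exp u) univ u :=
    fun u _ => ((Real.hasDerivAt_exp u).const_mul c).hasDerivWithinAt
  have hinj : Function.Injective fun u => c * Real.exp u :=
    (mul_right_injective₀ hc.ne').comp Real.exp_injective
  rw [← image_mul_exp_univ hc,
    lintegral_image_eq_lintegral_abs_deriv_mul MeasurableSet.univ hderiv hinj.injOn,
    Measure.restrict_univ]
  simp only [abs_of_pos (mul_pos hc (Real.exp_pos _))]

lemma mul_exp_mul_rpow_mul_exp (ν u : ℝ) {p q : ℝ} (hp : 0 < p) (hq : 0 < q) :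
    p / q * Real.exp u * ((p / q * Real.exp u) ^ (ν - 1) *
        Real.exp (-(p ^ 2 / (p / q * Real.exp u) + q ^ 2 * (p / q * Real.exp u)) / 2)) =
      (p / q) ^ ν * Real.exp (ν * u - p * q * Real.cosh u) := by
  have hpow : p / q * Real.exp u * (p / q * Real.exp u) ^ (ν - 1) =
      (p / q) ^ ν * Real.exp (ν * u) := by
    rw [Real.rpow_sub_one (by positivity), mul_div_cancel₀ _ (by positivity),
      Real.mul_rpow (by positivity) (by positivity), ← Real.exp_mul, mul_comm u]
  have hexp : -(p ^ 2 / (p / q * Real.exp u) + q ^ 2 * (p / q * Real.exp u)) / 2 =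
      -(p * q * Real.cosh u) := by
    rw [Real.cosh_eq, Real.exp_neg]
    field_simp
    ring
  rw [← mul_assoc, hpow, hexp, mul_assoc, ← Real.exp_add, sub_eq_add_neg]

lemma lintegral_rpow_mul_exp_neg_div_add_mul (ν : ℝ) {p q : ℝ} (hp : 0 < p) (hq : 0 < q) :
    ∫⁻ s in Ioi 0, ENNReal.ofReal (s ^ (ν - 1) * Real.exp (-(p ^ 2 / s + q ^ 2 * s) / 2)) =
      ENNReal.ofReal (2 * (p / q) ^ ν * besselK ν (p * q)) := by
  have hpq : 0 < p * q := mul_pos hp hq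
  calc
    _ = ∫⁻ u, ENNReal.ofReal ((p / q) ^ ν * Real.exp (ν * u - p * q * Real.cosh u)) := by
      rw [lintegral_Ioi_eq_lintegral_mul_exp (div_pos hp hq)]
      congr 1 with u
      rw [← ENNReal.ofReal_mul (by positivity), mul_exp_mul_rpow_mul_exp ν u hp hq]
    _ = ENNReal.ofReal (∫ u, (p / q) ^ ν * Real.exp (ν * u - p * q * Real.cosh u)) :=
      (ofReal_integral_eq_lintegral_ofReal ((integrable_exp_mul_sub_mul_cosh ν hpq).const_mul _)
        (ae_of_all _ fun u => by positivity)).symm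
    _ = _ := by
      rw [integral_const_mul, integral_exp_mul_sub_mul_cosh ν hpq]
      ring_nf

end Bessel

section Gamma

lemma gammaMeasure_eq_restrict_Ioi (a b : ℝ) :
    gammaMeasure a b = (volume.restrict (Ioi 0)).withDensity (gammaPDF a b) := by
  rw [gammaMeasure, ← withDensity_indicator measurableSet_Ioi]
  refine withDensity_congr_ae ?_
  filter_upwards [Measure.ae_ne volume (0 : ℝ)] with s hs
  rcases hs.lt_or_gt with hneg | hpos
  · rw [gammaPDF_of_neg hneg, indicator_of_notMem (notMem_Ioi.2 hneg.le)]
  · rw [indicator_of_mem (mem_Ioi.2 hpos)]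

lemma ae_gammaMeasure_pos (a b : ℝ) : ∀ᵐ s ∂gammaMeasure a b, 0 < s := by
  rw [gammaMeasure_eq_restrict_Ioi]
  exact (withDensity_absolutelyContinuous _ _).ae_le (ae_restrict_mem measurableSet_Ioi)

lemma measurable_gammaPDF (a b : ℝ) : Measurable (gammaPDF a b) :=
  (measurable_gammaPDFReal a b).ennreal_ofReal

lemma lintegral_gammaMeasure {a b : ℝ} {f : ℝ → ℝ≥0∞} (hf : Measurable f) :
    ∫⁻ s, f s ∂gammaMeasure a b = ∫⁻ s in Ioi 0, gammaPDF a b s * f s := by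
  rw [gammaMeasure_eq_restrict_Ioi,
    lintegral_withDensity_eq_lintegral_mul _ (measurable_gammaPDF a b) hf]
  rfl

-- For independent gamma variables, the sum and the proportion of the first are independent, the
-- latter being beta distributed; the factor `x` is the Jacobian.
lemma mul_gammaPDFReal_mul_gammaPDFReal {a₁ a₂ b x u : ℝ} (h₁ : 0 < a₁) (h₂ : 0 < a₂)
    (hb : 0 < b) (hx : 0 < x) (hu₀ : 0 < u) (hu₁ : u < 1) :
    x * (gammaPDFReal a₁ b (x * u) * gammaPDFReal a₂ b (x * (1 - u))) =
      gammaPDFReal (a₁ + a₂) b x * betaPDFReal a₁ a₂ u := by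
  have hΓ₁ := (Real.Gamma_pos_of_pos h₁).ne'
  have hΓ₂ := (Real.Gamma_pos_of_pos h₂).ne'
  have hΓ₁₂ := (Real.Gamma_pos_of_pos (add_pos h₁ h₂)).ne'
  have hu : 0 < 1 - u := sub_pos.2 hu₁
  have hexp : Real.exp (-(b * (x * u))) * Real.exp (-(b * (x * (1 - u)))) =
      Real.exp (-(b * x)) := by
    rw [← Real.exp_add]
    ring_nf
  have hpow : x * (x ^ (a₁ - 1) * x ^ (a₂ - 1)) = x ^ (a₁ + a₂ - 1) := by
    rw [← Real.rpow_add hx, mul_comm, ← Real.rpow_add_one hx.ne']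
    ring_nf
  rw [gammaPDFReal, gammaPDFReal, gammaPDFReal, betaPDFReal, if_pos (by positivity),
    if_pos (by positivity), if_pos hx.le, if_pos ⟨hu₀, hu₁⟩, beta, Real.rpow_add hb, ← hexp, ← hpow,
    Real.mul_rpow hx.le hu₀.le, Real.mul_rpow hx.le hu.le]
  field_simp

lemma ofReal_mul_gammaPDF_mul_gammaPDF {a₁ a₂ b x u : ℝ} (h₁ : 0 < a₁) (h₂ : 0 < a₂)
    (hb : 0 < b) (hx : 0 < x) (hu₀ : u ≠ 0) (hu₁ : u ≠ 1) :
    ENNReal.ofReal x * (gammaPDF a₁ b (x * u) * gammaPDF a₂ b (x * (1 - u))) =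
      gammaPDF (a₁ + a₂) b x * betaPDF a₁ a₂ u := by
  rcases hu₀.lt_or_gt with hneg | hpos
  · rw [betaPDF_eq_zero_of_nonpos hneg.le, gammaPDF_of_neg (mul_neg_of_pos_of_neg hx hneg)]
    simp only [zero_mul, mul_zero]
  rcases hu₁.lt_or_gt with hlt | hgt
  · rw [gammaPDF, gammaPDF, gammaPDF, betaPDF, ← ENNReal.ofReal_mul (gammaPDFReal_nonneg h₁ hb _),
      ← ENNReal.ofReal_mul hx.le, ← ENNReal.ofReal_mul (gammaPDFReal_nonneg (by positivity) hb _),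
      mul_gammaPDFReal_mul_gammaPDFReal h₁ h₂ hb hx hpos hlt]
  · rw [betaPDF_eq_zero_of_one_le hgt.le,
      gammaPDF_of_neg (mul_neg_of_pos_of_neg hx (sub_neg.2 hgt))]
    simp only [mul_zero]

lemma lintegral_eq_ofReal_mul_lintegral_comp_mul {x : ℝ} (hx : 0 < x) {f : ℝ → ℝ≥0∞}
    (hf : Measurable f) : ∫⁻ y, f y = ENNReal.ofReal x * ∫⁻ u, f (x * u) := by
  conv_lhs => rw [← Real.smul_map_volume_mul_left hx.ne', lintegral_smul_measure,
    lintegral_map hf (measurable_const_mul x), abs_of_pos hx, smul_eq_mul]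

lemma gammaPDF_lconvolution_gammaPDF {a₁ a₂ b x : ℝ} (h₁ : 0 < a₁) (h₂ : 0 < a₂) (hb : 0 < b)
    (hx : x ≠ 0) : (gammaPDF a₁ b ⋆ₗ gammaPDF a₂ b) x = gammaPDF (a₁ + a₂) b x := by
  have hmeas₁ := measurable_gammaPDF a₁ b
  have hmeas₂ := measurable_gammaPDF a₂ b
  rw [lconvolution_def]
  rcases hx.lt_or_gt with hneg | hpos
  · rw [gammaPDF_of_neg hneg, lintegral_eq_zero_of_ae_eq_zero]
    filter_upwards with y
    rcases lt_or_ge y 0 with hy | hy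
    · rw [gammaPDF_of_neg hy, zero_mul, Pi.zero_apply]
    · rw [gammaPDF_of_neg (show -y + x < 0 by linarith), mul_zero, Pi.zero_apply]
  · rw [lintegral_eq_ofReal_mul_lintegral_comp_mul hpos (by fun_prop),
      ← lintegral_const_mul _ (by fun_prop)]
    calc
      _ = ∫⁻ u, gammaPDF (a₁ + a₂) b x * betaPDF a₁ a₂ u := by
        refine lintegral_congr_ae ?_
        filter_upwards [Measure.ae_ne volume 0, Measure.ae_ne volume 1] with u hu₀ hu₁
        rw [← ofReal_mul_gammaPDF_mul_gammaPDF h₁ h₂ hb hpos hu₀ hu₁,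
          show -(x * u) + x = x * (1 - u) by ring]
      _ = _ := by
        have hbeta : Measurable (betaPDF a₁ a₂) := (measurable_betaPDFReal a₁ a₂).ennreal_ofReal
        rw [lintegral_const_mul _ hbeta, lintegral_betaPDF_eq_one h₁ h₂, mul_one]

lemma gammaMeasure_conv_gammaMeasure {a₁ a₂ b : ℝ} (h₁ : 0 < a₁) (h₂ : 0 < a₂) (hb : 0 < b) :
    gammaMeasure a₁ b ∗ gammaMeasure a₂ b = gammaMeasure (a₁ + a₂) b := by
  rw [gammaMeasure, gammaMeasure,
    conv_withDensity_eq_lconvolution (measurable_gammaPDF a₁ b) (measurable_gammaPDF a₂ b)]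
  refine withDensity_congr_ae ?_
  filter_upwards [Measure.ae_ne volume 0] with x hx
  exact gammaPDF_lconvolution_gammaPDF h₁ h₂ hb hx

end Gamma

section Mixture

lemma comp_conv_comp {M N : Type*} [AddMonoid M] [MeasurableSpace M] [MeasurableAdd₂ M]
    [AddMonoid N] [MeasurableSpace N] [MeasurableAdd₂ N] {κ : Kernel M N} [IsSFiniteKernel κ]
    {ν₁ ν₂ : Measure M} [SFinite ν₁] [SFinite ν₂]
    (hκ : ∀ᵐ s ∂ν₁, ∀ᵐ t ∂ν₂, κ s ∗ κ t = κ (s + t)) :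
    (κ ∘ₘ ν₁) ∗ (κ ∘ₘ ν₂) = κ ∘ₘ (ν₁ ∗ ν₂) := by
  refine Measure.ext_of_lintegral _ fun f hf => ?_
  have hf_inner : Measurable fun p : N × M => ∫⁻ y, f (p.1 + y) ∂κ p.2 :=
    Measurable.lintegral_kernel_prod_right (κ := κ.prodMkLeft N)
      (f := fun p y => f (p.1 + y)) (by fun_prop)
  calc
    _ = ∫⁻ s, ∫⁻ x, ∫⁻ t, ∫⁻ y, f (x + y) ∂κ t ∂ν₂ ∂κ s ∂ν₁ := by
      rw [Measure.lintegral_conv hf, Measure.lintegral_bind κ.aemeasurable (by fun_prop)]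
      congr! 4 with s x
      exact Measure.lintegral_bind κ.aemeasurable (by fun_prop)
    _ = ∫⁻ s, ∫⁻ t, ∫⁻ z, f z ∂(κ s ∗ κ t) ∂ν₂ ∂ν₁ := by
      congr! 2 with s
      rw [lintegral_lintegral_swap hf_inner.aemeasurable]
      simp only [Measure.lintegral_conv hf]
    _ = ∫⁻ s, ∫⁻ t, ∫⁻ z, f z ∂κ (s + t) ∂ν₂ ∂ν₁ := by
      refine lintegral_congr_ae ?_
      filter_upwards [hκ] with s hs
      refine lintegral_congr_ae ?_
      filter_upwards [hs] with t hst
      rw [hst]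
    _ = _ := by
      rw [Measure.lintegral_bind κ.aemeasurable hf.aemeasurable,
        Measure.lintegral_conv hf.lintegral_kernel]

end Mixture

section VarianceGamma

/-- The transition kernel from the origin of Brownian motion with drift `θ` and volatility `σ`: the
law of the position at time `s`. For negative `s` the variance is truncated to zero. -/
noncomputable def brownianKernel (θ σ : ℝ) : Kernel ℝ ℝ where
  toFun s := gaussianReal (θ * s) (σ ^ 2 * s).toNNReal
  measurable' := by fun_prop

instance (θ σ : ℝ) : IsMarkovKernel (brownianKernel θ σ) :=
  ⟨fun _ => inferInstanceAs (IsProbabilityMeasure (gaussianReal _ _))⟩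

lemma brownianKernel_apply (θ σ s : ℝ) :
    brownianKernel θ σ s = gaussianReal (θ * s) (σ ^ 2 * s).toNNReal :=
  rfl

lemma brownianKernel_conv_brownianKernel (θ σ : ℝ) {s t : ℝ} (hs : 0 ≤ s) (ht : 0 ≤ t) :
    brownianKernel θ σ s ∗ brownianKernel θ σ t = brownianKernel θ σ (s + t) := by
  rw [brownianKernel_apply, brownianKernel_apply, brownianKernel_apply,
    gaussianReal_conv_gaussianReal, mul_add, mul_add,
    Real.toNNReal_add (by positivity) (by positivity)]

/-- The variance-gamma distribution `VG(r, θ, σ, 0)`. -/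
noncomputable def vgMeasure (r θ σ : ℝ) : Measure ℝ :=
  volume.withDensity fun x => ENNReal.ofReal (vgPDF r θ σ x)

lemma rpow_div_two_eq_rpow_mul_sqrt {b : ℝ} (hb : 0 < b) (r : ℝ) :
    b ^ (r / 2) = b ^ ((r - 1) / 2) * √b := by
  rw [Real.sqrt_eq_rpow, ← Real.rpow_add hb]
  ring_nf

lemma gammaPDFReal_mul_gaussianPDFReal (r θ x : ℝ) {σ s : ℝ} (hσ : 0 < σ) (hs : 0 < s) :
    gammaPDFReal (r / 2) (1 / 2) s * gaussianPDFReal (θ * s) (σ ^ 2 * s).toNNReal x =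
      1 / (2 * (σ * √Real.pi * Real.Gamma (r / 2))) * Real.exp (θ * x / σ ^ 2) *
        (1 / 2) ^ ((r - 1) / 2) * (s ^ ((r - 1) / 2 - 1) *
          Real.exp (-((|x| / σ) ^ 2 / s + (√(θ ^ 2 + σ ^ 2) / σ) ^ 2 * s) / 2)) := by
  have hvar : ((σ ^ 2 * s).toNNReal : ℝ) = σ ^ 2 * s := Real.coe_toNNReal _ (by positivity)
  have hsqrt : √(2 * Real.pi * (σ ^ 2 * s)) = √2 * √Real.pi * (σ * √s) := by
    rw [Real.sqrt_mul (by positivity), Real.sqrt_mul zero_le_two, Real.sqrt_mul (by positivity),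
      Real.sqrt_sq hσ.le]
  have hexp : Real.exp (-(1 / 2 * s)) * Real.exp (-(x - θ * s) ^ 2 / (2 * (σ ^ 2 * s))) =
      Real.exp (θ * x / σ ^ 2) *
        Real.exp (-((|x| / σ) ^ 2 / s + (√(θ ^ 2 + σ ^ 2) / σ) ^ 2 * s) / 2) := by
    rw [← Real.exp_add, ← Real.exp_add, div_pow, div_pow, sq_abs, Real.sq_sqrt (by positivity)]
    congr 1
    field_simp
    ring
  have hhalf : √(1 / 2 : ℝ) = √2 / 2 := by
    rw [one_div, Real.sqrt_inv, ← Real.sqrt_div_self]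
  calc
    _ = (1 / 2 : ℝ) ^ (r / 2) / Real.Gamma (r / 2) * s ^ (r / 2 - 1) *
        (√2 * √Real.pi * (σ * √s))⁻¹ * (Real.exp (-(1 / 2 * s)) *
          Real.exp (-(x - θ * s) ^ 2 / (2 * (σ ^ 2 * s)))) := by
      rw [gammaPDFReal, if_pos hs.le, gaussianPDFReal, hvar, hsqrt]
      ring
    _ = _ := by
      rw [hexp, Real.rpow_sub_one hs.ne', Real.rpow_sub_one hs.ne',
        rpow_div_two_eq_rpow_mul_sqrt hs, rpow_div_two_eq_rpow_mul_sqrt one_half_pos, hhalf]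
      field_simp

lemma lintegral_gaussianPDF_gammaMeasure (θ : ℝ) {r σ x : ℝ} (hr : 0 < r) (hσ : 0 < σ)
    (hx : x ≠ 0) :
    ∫⁻ s, gaussianPDF (θ * s) (σ ^ 2 * s).toNNReal x ∂gammaMeasure (r / 2) (1 / 2) =
      ENNReal.ofReal (vgPDF r θ σ x) := by
  set ν := (r - 1) / 2 with hν
  set p := |x| / σ with hp
  set q := √(θ ^ 2 + σ ^ 2) / σ with hq
  set C := 1 / (2 * (σ * √Real.pi * Real.Gamma (r / 2))) * Real.exp (θ * x / σ ^ 2) *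
    (1 / 2 : ℝ) ^ ν with hC
  have hp₀ : 0 < p := div_pos (abs_pos.2 hx) hσ
  have hq₀ : 0 < q := by positivity
  have hC₀ : 0 ≤ C := by
    have := Real.Gamma_pos_of_pos (half_pos hr)
    positivity
  calc
    _ = ∫⁻ s in Ioi 0, ENNReal.ofReal C *
        ENNReal.ofReal (s ^ (ν - 1) * Real.exp (-(p ^ 2 / s + q ^ 2 * s) / 2)) := by
      rw [lintegral_gammaMeasure (by fun_prop)]
      refine setLIntegral_congr_fun measurableSet_Ioi fun s hs => ?_
      rw [gammaPDF, gaussianPDF, ← ENNReal.ofReal_mul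
        (gammaPDFReal_nonneg (half_pos hr) one_half_pos s), ← ENNReal.ofReal_mul hC₀,
        gammaPDFReal_mul_gaussianPDFReal r θ x hσ hs]
    _ = ENNReal.ofReal (C * (2 * (p / q) ^ ν * besselK ν (p * q))) := by
      rw [lintegral_const_mul' _ _ ENNReal.ofReal_ne_top,
        lintegral_rpow_mul_exp_neg_div_add_mul ν hp₀ hq₀, ← ENNReal.ofReal_mul hC₀]
    _ = ENNReal.ofReal (vgPDF r θ σ x) := by
      have hbase : |x| / (2 * √(θ ^ 2 + σ ^ 2)) = 1 / 2 * (p / q) := by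
        rw [hp, hq]
        field_simp
      have harg : √(θ ^ 2 + σ ^ 2) * |x| / σ ^ 2 = p * q := by
        rw [hp, hq]
        field_simp
      rw [vgPDF, hbase, harg, ← hν, Real.mul_rpow (by positivity) (by positivity), hC]
      congr 1
      field_simp

lemma brownianKernel_comp_gammaMeasure (θ : ℝ) {r σ : ℝ} (hr : 0 < r) (hσ : 0 < σ) :
    brownianKernel θ σ ∘ₘ gammaMeasure (r / 2) (1 / 2) = vgMeasure r θ σ := by
  have := isProbabilityMeasure_gammaMeasure (half_pos hr) (one_half_pos (α := ℝ))
  ext B hB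
  calc
    _ = ∫⁻ s, ∫⁻ x in B, gaussianPDF (θ * s) (σ ^ 2 * s).toNNReal x ∂volume
        ∂gammaMeasure (r / 2) (1 / 2) := by
      rw [Measure.bind_apply hB (Kernel.aemeasurable _)]
      refine lintegral_congr_ae ?_
      filter_upwards [ae_gammaMeasure_pos (r / 2) (1 / 2)] with s hs
      rw [brownianKernel_apply, gaussianReal_apply _ (Real.toNNReal_pos.2 (by positivity)).ne']
    _ = ∫⁻ x in B, ∫⁻ s, gaussianPDF (θ * s) (σ ^ 2 * s).toNNReal x
        ∂gammaMeasure (r / 2) (1 / 2) :=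
      lintegral_lintegral_swap (by fun_prop)
    _ = _ := by
      rw [vgMeasure, withDensity_apply _ hB]
      refine lintegral_congr_ae ?_
      filter_upwards [ae_restrict_of_ae (Measure.ae_ne volume (0 : ℝ))] with x hx
      exact lintegral_gaussianPDF_gammaMeasure θ hr hσ hx

lemma vgMeasure_conv_vgMeasure (θ : ℝ) {r₁ r₂ σ : ℝ} (hr₁ : 0 < r₁) (hr₂ : 0 < r₂) (hσ : 0 < σ) :
    vgMeasure r₁ θ σ ∗ vgMeasure r₂ θ σ = vgMeasure (r₁ + r₂) θ σ := by
  have := isProbabilityMeasure_gammaMeasure (half_pos hr₁) (one_half_pos (α := ℝ))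
  have := isProbabilityMeasure_gammaMeasure (half_pos hr₂) (one_half_pos (α := ℝ))
  rw [← brownianKernel_comp_gammaMeasure θ hr₁ hσ, ← brownianKernel_comp_gammaMeasure θ hr₂ hσ,
    ← brownianKernel_comp_gammaMeasure θ (add_pos hr₁ hr₂) hσ, add_div,
    ← gammaMeasure_conv_gammaMeasure (half_pos hr₁) (half_pos hr₂) one_half_pos]
  refine comp_conv_comp ?_
  filter_upwards [ae_gammaMeasure_pos _ _] with s hs
  filter_upwards [ae_gammaMeasure_pos _ _] with t ht
  exact brownianKernel_conv_brownianKernel θ σ hs.le ht.le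

end VarianceGamma

/-- If `W₁ ~ VG(r₁, θ, σ, 0)` and `W₂ ~ VG(r₂, θ, σ, 0)` are independent, then
`W₁ + W₂ ~ VG(r₁ + r₂, θ, σ, 0)`. -/
theorem variance_gamma_add
    {Ω : Type*} [MeasurableSpace Ω] (μ : Measure Ω) [IsProbabilityMeasure μ]
    (r₁ r₂ θ σ : ℝ) (hr₁ : 0 < r₁) (hr₂ : 0 < r₂) (hσ : 0 < σ)
    (W₁ W₂ : Ω → ℝ) (hW₁ : Measurable W₁) (hW₂ : Measurable W₂)
    (hindep : IndepFun W₁ W₂ μ)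
    (hW₁law : Measure.map W₁ μ =
      (volume : Measure ℝ).withDensity (fun x => ENNReal.ofReal (vgPDF r₁ θ σ x)))
    (hW₂law : Measure.map W₂ μ =
      (volume : Measure ℝ).withDensity (fun x => ENNReal.ofReal (vgPDF r₂ θ σ x))) :
    Measure.map (fun ω => W₁ ω + W₂ ω) μ =
      (volume : Measure ℝ).withDensity
        (fun x => ENNReal.ofReal (vgPDF (r₁ + r₂) θ σ x)) := by
  change Measure.map (W₁ + W₂) μ = vgMeasure (r₁ + r₂) θ σ
  rw [hindep.map_add_eq_map_conv_map hW₁ hW₂, hW₁law, hW₂law]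
  exact vgMeasure_conv_vgMeasure θ hr₁ hr₂ hσ
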